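/- For any completely regular Hausdorff (Tychonoff) topological space X, the following are equivalent: (i) Player II has a winning Markov strategy in the ω-Menger game G_fin(Ω_X, Ω_X); (ii) for every f ∈ C_p(X), Player II has a winning Markov strategy in the countable fan tightness game G_fin(ℬ_{C_p(X),f}, ℬ_{C_p(X),f}); (iii) for every f ∈ C_p(X), Player II has a winning Markov strategy in the countable dense fan tightness game G_fin(𝒟_{C_p(X)}, ℬ_{C_p(X),f}). -/

import Mathlib

open TopologicalSpace Cardinal

/-- Player II has a winning (perfect-information) strategy in the selection game
`G_fin(𝒜, ℬ)`: during round `n`, Player I plays `A n ∈ 𝒜` and II responds with a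
finite subset of `A n` depending on `⟨A 0, …, A n⟩`; II wins iff the union of
its selections lies in `ℬ`. -/
def WinStratFin {X : Type*} (𝒜 ℬ : Set (Set X)) : Prop :=
  ∃ σ : (n : ℕ) → (Fin (n + 1) → Set X) → Set X,
    (∀ (n : ℕ) (s : Fin (n + 1) → Set X), (∀ i, s i ∈ 𝒜) →
      (σ n s).Finite ∧ σ n s ⊆ s (Fin.last n)) ∧
    ∀ A : ℕ → Set X, (∀ n, A n ∈ 𝒜) →
      (⋃ n : ℕ, σ n (fun i => A i)) ∈ ℬ

/-- Player II has a winning Markov strategy in `G_fin(𝒜, ℬ)`: its finite selection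
from `A n` depends only on `A n` and the round number `n`. -/
def WinMarkovFin {X : Type*} (𝒜 ℬ : Set (Set X)) : Prop :=
  ∃ σ : Set X → ℕ → Set X,
    (∀ A ∈ 𝒜, ∀ n : ℕ, (σ A n).Finite ∧ σ A n ⊆ A) ∧
    ∀ A : ℕ → Set X, (∀ n, A n ∈ 𝒜) → (⋃ n : ℕ, σ (A n) n) ∈ ℬ

/-- Player II has a winning (perfect-information) strategy in the strong selection
game `G_1(𝒜, ℬ)`: during round `n`, Player I plays `A n ∈ 𝒜` and II responds with a
single element of `A n` depending on `⟨A 0, …, A n⟩`; II wins iff the set of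
its selections lies in `ℬ`. -/
def WinStratOne {X : Type*} (𝒜 ℬ : Set (Set X)) : Prop :=
  ∃ σ : (n : ℕ) → (Fin (n + 1) → Set X) → X,
    (∀ (n : ℕ) (s : Fin (n + 1) → Set X), (∀ i, s i ∈ 𝒜) →
      σ n s ∈ s (Fin.last n)) ∧
    ∀ A : ℕ → Set X, (∀ n, A n ∈ 𝒜) →
      {x | ∃ n : ℕ, x = σ n (fun i => A i)} ∈ ℬ

/-- Player II has a winning Markov strategy in `G_1(𝒜, ℬ)`. -/
def WinMarkovOne {X : Type*} (𝒜 ℬ : Set (Set X)) : Prop :=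
  ∃ σ : Set X → ℕ → X,
    (∀ A ∈ 𝒜, ∀ n : ℕ, σ A n ∈ A) ∧
    ∀ A : ℕ → Set X, (∀ n, A n ∈ 𝒜) → {x | ∃ n : ℕ, x = σ (A n) n} ∈ ℬ

/-- `𝒟_X`: the collection of dense subsets of `X`. -/
def denseFamily (X : Type*) [TopologicalSpace X] : Set (Set X) := {D | Dense D}

/-- `ℬ_{X,x}`: the collection of subsets of `X` having `x` in their closure. -/
def blades (X : Type*) [TopologicalSpace X] (x : X) : Set (Set X) :=
  {A | x ∈ closure A}

/-- An ω-cover of `X`: an open cover such that every finite subset of `X` is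
contained in some member. -/
def IsOmegaCover {X : Type*} [TopologicalSpace X] (𝒰 : Set (Set X)) : Prop :=
  (∀ U ∈ 𝒰, IsOpen U) ∧ (⋃₀ 𝒰 = Set.univ) ∧
    ∀ F : Set X, F.Finite → ∃ U ∈ 𝒰, F ⊆ U

/-- `Ω_X`: the collection of ω-covers of `X`. -/
def omegaCovers (X : Type*) [TopologicalSpace X] : Set (Set (Set X)) :=
  {𝒰 | IsOmegaCover 𝒰}

/-- `𝒪_X`: the collection of open covers of `X`. -/
def openCovers (X : Type*) [TopologicalSpace X] : Set (Set (Set X)) :=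
  {𝒰 | (∀ U ∈ 𝒰, IsOpen U) ∧ ⋃₀ 𝒰 = Set.univ}

/-- `C_p(X)`: continuous real-valued functions on `X` with the topology of
pointwise convergence (subspace of the product `ℝ^X`). -/
abbrev Cp (X : Type*) [TopologicalSpace X] : Type _ := {f : X → ℝ // Continuous f}

/-- Countable fan tightness of `Y` at `y`. -/
def CFTat (Y : Type*) [TopologicalSpace Y] (y : Y) : Prop :=
  ∀ A : ℕ → Set Y, (∀ n, y ∈ closure (A n)) →
    ∃ B : ℕ → Set Y, (∀ n, (B n).Finite ∧ B n ⊆ A n) ∧ y ∈ closure (⋃ n, B n)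

/-- Countable dense fan tightness of `Y` at `y`. -/
def CDFTat (Y : Type*) [TopologicalSpace Y] (y : Y) : Prop :=
  ∀ A : ℕ → Set Y, (∀ n, Dense (A n)) →
    ∃ B : ℕ → Set Y, (∀ n, (B n).Finite ∧ B n ⊆ A n) ∧ y ∈ closure (⋃ n, B n)

/-- Selective separability of `X`. -/
def SelSep (X : Type*) [TopologicalSpace X] : Prop :=
  ∀ D : ℕ → Set X, (∀ n, Dense (D n)) →
    ∃ E : ℕ → Set X, (∀ n, (E n).Finite ∧ E n ⊆ D n) ∧ Dense (⋃ n, E n)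

/-- The Ω-Menger selection principle `S_fin(Ω_X, Ω_X)`. -/
def OmegaMenger (X : Type*) [TopologicalSpace X] : Prop :=
  ∀ 𝒰 : ℕ → Set (Set X), (∀ n, 𝒰 n ∈ omegaCovers X) →
    ∃ ℱ : ℕ → Set (Set X), (∀ n, (ℱ n).Finite ∧ ℱ n ⊆ 𝒰 n) ∧
      (⋃ n, ℱ n) ∈ omegaCovers X

/-- The one-point Lindelöfication topology on `Option α`: sets not containing
`none` (the point `∞`) are open, and a set containing `∞` is open iff its
complement is countable. -/
def lindTop (α : Type*) : TopologicalSpace (Option α) where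
  IsOpen S := none ∈ S → Sᶜ.Countable
  isOpen_univ := by simp
  isOpen_inter := by
    intro s t hs ht hmem
    rw [Set.compl_inter]
    exact (hs hmem.1).union (ht hmem.2)
  isOpen_sUnion := by
    intro S hS hmem
    obtain ⟨s, hsS, hns⟩ := hmem
    exact ((hS s hsS hns).mono
      (Set.compl_subset_compl.mpr (Set.subset_sUnion_of_mem hsS)))

/-!
A function `g` is within `ε` of `f` on a finite set `F` iff `F` lies in the open set
`{x | |g x - f x| < ε}`; hence `f ∈ closure A` iff, for every `ε > 0`, these sets for `g ∈ A` form
an ω-cover. So II answers `A` in round `n` by consulting the ω-Menger strategy on the ω-cover with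
`ε = 1 / (n + 1)`. The selected sets must cover `F` in arbitrarily late rounds to reach every `ε`,
which is arranged by letting II play simultaneously against all tails of the run.

Conversely, by complete regularity an ω-cover `𝒰` yields a dense set in `C_p(X)`: the functions
that agree with `f + 1` outside some member of `𝒰`. If such a function is within distance less than
`1` of `f` on `F`, then the corresponding member contains `F`.
-/

section MarkovStrategies

variable {α β : Type*} {𝒜 ℬ : Set (Set α)} {𝒞 𝒟 : Set (Set β)}

theorem WinMarkovFin.mono {𝒜' ℬ' : Set (Set α)} (h : WinMarkovFin 𝒜 ℬ) (h𝒜 : 𝒜' ⊆ 𝒜)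
    (hℬ : ℬ ⊆ ℬ') : WinMarkovFin 𝒜' ℬ' := by
  obtain ⟨σ, hσ, hwin⟩ := h
  exact ⟨σ, fun A hA => hσ A (h𝒜 hA), fun A hA => hℬ (hwin A fun n => h𝒜 (hA n))⟩

theorem WinMarkovFin.exists_forall_tail (h : WinMarkovFin 𝒜 ℬ) :
    ∃ σ : Set α → ℕ → Set α,
      (∀ A ∈ 𝒜, ∀ n, (σ A n).Finite ∧ σ A n ⊆ A) ∧
      ∀ A : ℕ → Set α, (∀ n, A n ∈ 𝒜) → ∀ N, ∃ B ∈ ℬ, B ⊆ ⋃ n ≥ N, σ (A n) n := by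
  obtain ⟨σ, hσ, hwin⟩ := h
  -- In round `n` II also answers as if the game had started in any of the rounds `0, …, n`.
  refine ⟨fun A n => ⋃ k ≤ n, σ A k, fun A hA n => ⟨?_, ?_⟩, fun A hA N => ?_⟩
  · exact (Set.finite_le_nat n).biUnion fun k _ => (hσ A hA k).1
  · exact Set.iUnion₂_subset fun k _ => (hσ A hA k).2
  · refine ⟨_, hwin (fun k => A (N + k)) fun k => hA (N + k), Set.iUnion_subset fun k => ?_⟩
    exact fun a ha => Set.mem_iUnion₂.2 ⟨N + k, Nat.le_add_right N k,
      Set.mem_iUnion₂.2 ⟨k, Nat.le_add_left k N, ha⟩⟩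

theorem exists_finite_subset_forall_exists_rel {R : α → β → Prop} {E : Set α} {C : Set β}
    (hfin : E.Finite) (hE : E ⊆ {a | ∃ c ∈ C, R a c}) :
    ∃ D, (D.Finite ∧ D ⊆ C) ∧ ∀ a ∈ E, ∃ d ∈ D, R a d := by
  choose r hrC hR using hE
  have := hfin.to_subtype
  exact ⟨Set.range fun a : E => r a.2,
    ⟨Set.finite_range _, Set.range_subset_iff.2 fun a => hrC a.2⟩,
    fun a ha => ⟨r ha, ⟨⟨a, ha⟩, rfl⟩, hR ha⟩⟩

theorem WinMarkovFin.of_rel (h : WinMarkovFin 𝒜 ℬ) (R : ℕ → α → β → Prop)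
    (hmove : ∀ n, ∀ C ∈ 𝒞, {a | ∃ c ∈ C, R n a c} ∈ 𝒜)
    (hwin : ∀ C : ℕ → Set β, (∀ n, C n ∈ 𝒞) → ∀ D ⊆ ⋃ n, C n,
      (∀ N, ∃ B ∈ ℬ, ∀ a ∈ B, ∃ n ≥ N, ∃ d ∈ D, R n a d) → D ∈ 𝒟) :
    WinMarkovFin 𝒞 𝒟 := by
  obtain ⟨σ, hσ, hσwin⟩ := h.exists_forall_tail
  have hreply : ∀ C ∈ 𝒞, ∀ n, ∃ D, (D.Finite ∧ D ⊆ C) ∧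
      ∀ a ∈ σ {a | ∃ c ∈ C, R n a c} n, ∃ d ∈ D, R n a d := fun C hC n =>
    have hσn := hσ _ (hmove n C hC) n
    exists_finite_subset_forall_exists_rel hσn.1 hσn.2
  choose! τ hτ hτR using hreply
  refine ⟨τ, hτ, fun C hC => hwin C hC _ ?_ fun N => ?_⟩
  · exact Set.iUnion_mono fun n => (hτ (C n) (hC n) n).2
  · obtain ⟨B, hB, hBσ⟩ := hσwin _ (fun n => hmove n (C n) (hC n)) N
    refine ⟨B, hB, fun a ha => ?_⟩
    obtain ⟨n, hn, han⟩ := Set.mem_iUnion₂.1 (hBσ ha)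
    obtain ⟨d, hd, had⟩ := hτR (C n) (hC n) n a han
    exact ⟨n, hn, d, Set.mem_iUnion.2 ⟨n, hd⟩, had⟩

end MarkovStrategies

section PointwiseConvergence

open Filter Topology

variable {ι : Type*} {E : ι → Type*} [∀ i, PseudoMetricSpace (E i)]

theorem hasBasis_nhds_pi_dist (f : ∀ i, E i) :
    (𝓝 f).HasBasis (fun p : Set ι × ℝ => p.1.Finite ∧ 0 < p.2)
      fun p => {g | ∀ i ∈ p.1, dist (g i) (f i) < p.2} := by
  rw [nhds_pi]
  refine hasBasis_pi_same_index (fun i => Metric.nhds_basis_ball) fun I r hI hr => ?_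
  have hsmall : ∀ᶠ ε in 𝓝[>] (0 : ℝ), ∀ i ∈ I, ε ≤ r i :=
    hI.eventually_all.2 fun i hi => mem_of_superset (Ioc_mem_nhdsGT (hr i hi)) fun _ hε => hε.2
  obtain ⟨ε, hεr, hε⟩ := (hsmall.and self_mem_nhdsWithin).exists
  exact ⟨ε, hε, fun i hi => Metric.ball_subset_ball (hεr i hi)⟩

theorem mem_closure_subtype_pi_iff_dist {p : (∀ i, E i) → Prop} {A : Set (Subtype p)}
    {f : Subtype p} :
    f ∈ closure A ↔ ∀ F : Set ι, F.Finite → ∀ ε > 0,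
      ∃ g ∈ A, ∀ i ∈ F, dist (g.1 i) (f.1 i) < ε := by
  have hbasis := IsInducing.subtypeVal.basis_nhds (hasBasis_nhds_pi_dist f.1)
  simp only [mem_closure_iff_nhds_basis hbasis, Prod.forall, and_imp]
  exact forall_congr' fun F => ⟨fun h hF ε hε => h ε hF hε, fun h ε hF hε => h hF ε hε⟩

end PointwiseConvergence

section CompletelyRegular

open Set

variable {X : Type*} [TopologicalSpace X] [CompletelyRegularSpace X] {K U : Set X}

theorem exists_continuousMap_eqOn_zero_eqOn_one_compl (hK : IsCompact K) (hU : IsOpen U)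
    (hKU : K ⊆ U) : ∃ φ : C(X, ℝ), EqOn φ 0 K ∧ EqOn φ 1 Uᶜ := by
  obtain ⟨V, hV, rfl⟩ := isInducing_stoneCechUnit.isOpen_iff.1 hU
  have hclosed : IsClosed (stoneCechUnit '' K) := (hK.image continuous_stoneCechUnit).isClosed
  obtain ⟨φ, hφ0, hφ1, -⟩ := exists_continuous_zero_one_of_isClosed hclosed hV.isClosed_compl
    (disjoint_compl_right_iff_subset.2 (image_subset_iff.2 hKU))
  exact ⟨φ.comp ⟨stoneCechUnit, continuous_stoneCechUnit⟩,
    fun x hx => hφ0 (mem_image_of_mem _ hx), fun x hx => hφ1 hx⟩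

theorem exists_continuous_eqOn_eqOn_compl {E : Type*} [AddCommGroup E] [Module ℝ E]
    [TopologicalSpace E] [IsTopologicalAddGroup E] [ContinuousSMul ℝ E] {f g : X → E}
    (hf : Continuous f) (hg : Continuous g) (hK : IsCompact K) (hU : IsOpen U) (hKU : K ⊆ U) :
    ∃ h : X → E, Continuous h ∧ EqOn h f K ∧ EqOn h g Uᶜ := by
  obtain ⟨φ, hφ0, hφ1⟩ := exists_continuousMap_eqOn_zero_eqOn_one_compl hK hU hKU
  refine ⟨fun x => AffineMap.lineMap (f x) (g x) (φ x), ?_, fun x hx => ?_, fun x hx => ?_⟩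
  · fun_prop
  · simp [hφ0 hx]
  · simp [hφ1 hx]

end CompletelyRegular

section OmegaCovers

variable {X : Type*} [TopologicalSpace X]

theorem mem_omegaCovers_iff {𝒰 : Set (Set X)} :
    𝒰 ∈ omegaCovers X ↔
      (∀ U ∈ 𝒰, IsOpen U) ∧ ∀ F : Set X, F.Finite → ∃ U ∈ 𝒰, F ⊆ U := by
  refine ⟨fun h => ⟨h.1, h.2.2⟩, fun h => ⟨h.1, Set.eq_univ_of_forall fun x => ?_, h.2⟩⟩
  obtain ⟨U, hU, hxU⟩ := h.2 {x} (Set.finite_singleton x)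
  exact ⟨U, hU, hxU rfl⟩

theorem setOf_dist_lt_mem_omegaCovers {f : Cp X} {A : Set (Cp X)} (hA : f ∈ closure A) {ε : ℝ}
    (hε : 0 < ε) : {U | ∃ g ∈ A, U = {x | dist (g.1 x) (f.1 x) < ε}} ∈ omegaCovers X := by
  refine mem_omegaCovers_iff.2 ⟨?_, fun F hF => ?_⟩
  · rintro _ ⟨g, -, rfl⟩
    exact isOpen_lt (g.2.dist f.2) continuous_const
  · obtain ⟨g, hg, hgF⟩ := mem_closure_subtype_pi_iff_dist.1 hA F hF ε hε
    exact ⟨_, ⟨g, hg, rfl⟩, hgF⟩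

theorem dense_setOf_exists_eqOn_compl [CompletelyRegularSpace X] {𝒰 : Set (Set X)}
    (h𝒰 : 𝒰 ∈ omegaCovers X) (g : Cp X) :
    Dense {h : Cp X | ∃ U ∈ 𝒰, Set.EqOn h.1 g.1 Uᶜ} := by
  intro f
  refine mem_closure_subtype_pi_iff_dist.2 fun F hF ε hε => ?_
  obtain ⟨U, hU, hFU⟩ := h𝒰.2.2 F hF
  obtain ⟨h, hcont, hhf, hhg⟩ :=
    exists_continuous_eqOn_eqOn_compl f.2 g.2 hF.isCompact (h𝒰.1 U hU) hFU
  exact ⟨⟨h, hcont⟩, ⟨U, hU, hhg⟩, fun x hx => by simpa [hhf hx] using hε⟩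

end OmegaCovers

section Games

variable {X : Type*} [TopologicalSpace X]

theorem WinMarkovFin.blades_of_omegaCovers (h : WinMarkovFin (omegaCovers X) (omegaCovers X))
    (f : Cp X) : WinMarkovFin (blades (Cp X) f) (blades (Cp X) f) := by
  refine h.of_rel (fun n U g => U = {x | dist (g.1 x) (f.1 x) < 1 / ((n : ℝ) + 1)})
    (fun n A hA => setOf_dist_lt_mem_omegaCovers hA Nat.one_div_pos_of_nat)
    fun A _ D _ htail => mem_closure_subtype_pi_iff_dist.2 fun F hF ε hε => ?_
  obtain ⟨N, hN⟩ := exists_nat_one_div_lt hε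
  obtain ⟨𝒱, h𝒱, hD⟩ := htail N
  obtain ⟨U, hU, hFU⟩ := h𝒱.2.2 F hF
  obtain ⟨n, hn, g, hg, rfl⟩ := hD U hU
  refine ⟨g, hg, fun x hx => ?_⟩
  calc dist (g.1 x) (f.1 x) < 1 / ((n : ℝ) + 1) := hFU hx
    _ ≤ 1 / ((N : ℝ) + 1) := Nat.one_div_le_one_div hn
    _ < ε := hN

theorem WinMarkovFin.omegaCovers_of_dense [CompletelyRegularSpace X] {f : Cp X}
    (h : WinMarkovFin (denseFamily (Cp X)) (blades (Cp X) f)) :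
    WinMarkovFin (omegaCovers X) (omegaCovers X) := by
  let g : Cp X := ⟨fun x => f.1 x + 1, f.2.add continuous_const⟩
  refine h.of_rel (fun _ φ U => Set.EqOn φ.1 g.1 Uᶜ)
    (fun _ 𝒰 h𝒰 => dense_setOf_exists_eqOn_compl h𝒰 g)
    fun 𝒰 h𝒰 𝒱 h𝒱 htail => mem_omegaCovers_iff.2 ⟨fun U hU => ?_, fun F hF => ?_⟩
  · obtain ⟨n, hUn⟩ := Set.mem_iUnion.1 (h𝒱 hU)
    exact (h𝒰 n).1 U hUn
  · obtain ⟨B, hB, hB𝒱⟩ := htail 0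
    obtain ⟨φ, hφB, hφF⟩ := mem_closure_subtype_pi_iff_dist.1 hB F hF 1 one_pos
    obtain ⟨-, -, U, hU, hφU⟩ := hB𝒱 φ hφB
    refine ⟨U, hU, fun x hx => by_contra fun hxU => (hφF x hx).ne ?_⟩
    simp [hφU hxU, g]

end Games

theorem statement5_general (X : Type*) [TopologicalSpace X] [CompletelyRegularSpace X] :
    List.TFAE [WinMarkovFin (omegaCovers X) (omegaCovers X),
      ∀ f : Cp X, WinMarkovFin (blades (Cp X) f) (blades (Cp X) f),
      ∀ f : Cp X, WinMarkovFin (denseFamily (Cp X)) (blades (Cp X) f)] := by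
  tfae_have 1 → 2 := WinMarkovFin.blades_of_omegaCovers
  tfae_have 2 → 3 := fun h f => (h f).mono (fun _ hD => hD f) subset_rfl
  tfae_have 3 → 1 := fun h => (h ⟨0, continuous_zero⟩).omegaCovers_of_dense
  tfae_finish

/-- the Markov-strategy analogue of Statement 4. -/
theorem statement5 (X : Type*) [TopologicalSpace X] [T35Space X] :
    List.TFAE [WinMarkovFin (omegaCovers X) (omegaCovers X),
      ∀ f : Cp X, WinMarkovFin (blades (Cp X) f) (blades (Cp X) f),
      ∀ f : Cp X, WinMarkovFin (denseFamily (Cp X)) (blades (Cp X) f)] :=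
  statement5_general X
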